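/- Let K be a nontrivial finite abelian group of exponent d with a nondegenerate alternating bicharacter e : K × K → U(1). Then there exist elements x, y ∈ K, both of order d, such that e(x,y) is a primitive d-th root of unity, and K decomposes as an internal direct sum K = H ⊕ H⊥, where H is the subgroup generated by x and y and H⊥ = {k ∈ K : e(k,x) = 1 and e(k,y) = 1}; moreover the restriction of e to H⊥ × H⊥ is again a nondegenerate alternating bicharacter on H⊥. -/

import Mathlib

/-- An alternating bicharacter on an abelian group `K` (no topology): a map `K × K → U(1)`
which is a homomorphism in each variable separately and satisfies `e k k = 1`. -/
def IsAltBicharacter {K : Type*} [CommGroup K] (e : K → K → Circle) : Prop :=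
  (∀ k l l' : K, e k (l * l') = e k l * e k l') ∧
  (∀ k k' l : K, e (k * k') l = e k l * e k' l) ∧
  ∀ k : K, e k k = 1

/-- Nondegeneracy for a discrete group: the map `e♭ : K → Hom(K, U(1))`, `(e♭ l) k = e k l`,
is a group isomorphism. -/
def IsNondegenerate {K : Type*} [CommGroup K] (e : K → K → Circle) : Prop :=
  ∃ F : K ≃* (K →* Circle), ∀ k l : K, F l k = e k l

/-!
An element `x` whose order is the exponent `d` gives a character `e(-, x)` of order `d`, and some
value `e(y, x)` of this character has the same order `d`. The restriction of `e` to `H = ⟨x, y⟩` is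
then nondegenerate, since `x ^ m * y ^ n` pairs with `x` and `y` to `e(x, y) ^ n` and
`e(y, x) ^ m`.

As in linear algebra, a subgroup `H` on which `e` is nondegenerate splits off: the character
`e(-, k)` of `H` is represented by some `h ∈ H`, and `h⁻¹ * k` is orthogonal to `H`. An element of
`H⊥` orthogonal to `H⊥` is orthogonal to all of `H ⊔ H⊥ = K`, hence trivial. For finite groups this
suffices for nondegeneracy, because `K` and `Hom(K, U(1))` have the same cardinality.
-/

lemma exists_orderOf_apply_eq_orderOf {G M : Type*} [Group G] [Finite G] [CommGroup M]
    (χ : G →* M) : ∃ g, orderOf (χ g) = orderOf χ := by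
  have : Finite χ.range := Finite.of_surjective _ χ.rangeRestrict_surjective
  obtain ⟨w, hw⟩ := Monoid.exists_orderOf_eq_exponent
    (Monoid.ExponentExists.of_finite (G := χ.range))
  obtain ⟨g, rfl⟩ := χ.rangeRestrict_surjective w
  have hg : orderOf (χ g) = Monoid.exponent χ.range := (Subgroup.orderOf_coe _).trans hw
  refine ⟨g, Nat.dvd_antisymm (orderOf_dvd_of_pow_eq_one ?_) (orderOf_dvd_of_pow_eq_one ?_)⟩
  · rw [← MonoidHom.pow_apply, pow_orderOf_eq_one, MonoidHom.one_apply]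
  · ext k
    rw [hg]
    exact congrArg Subtype.val (Monoid.pow_exponent_eq_one (χ.rangeRestrict k))

lemma card_monoidHom_circle (K : Type*) [CommGroup K] [Finite K] :
    Nat.card (K →* Circle) = Nat.card K :=
  (Nat.card_congr (toUnits (G := Circle)).monoidHomCongrRight.toEquiv).trans
    (CommGroup.card_monoidHom_of_hasEnoughRootsOfUnity K Circle)

section Bicharacter

variable {K : Type*} [CommGroup K] {e : K → K → Circle}

namespace IsNondegenerate

lemma eq_one (hnd : IsNondegenerate e) {l : K} (h : ∀ k, e k l = 1) : l = 1 := by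
  obtain ⟨F, hF⟩ := hnd
  exact (map_eq_one_iff F F.injective).1 (MonoidHom.ext fun k => (hF k l).trans (h k))

lemma exists_eq_apply (hnd : IsNondegenerate e) (χ : K →* Circle) : ∃ l, ∀ k, e k l = χ k := by
  obtain ⟨F, hF⟩ := hnd
  exact ⟨F.symm χ, fun k => by rw [← hF, F.apply_symm_apply]⟩

end IsNondegenerate

namespace IsAltBicharacter

/-- The map `e♭ : K → Hom(K, U(1))`, `(e♭ l) k = e k l`, as a group homomorphism. -/
noncomputable def flat (he : IsAltBicharacter e) : K →* K →* Circle :=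
  MonoidHom.mk' (fun l => MonoidHom.mk' (fun k => e k l) fun k k' => he.2.1 k k' l)
    fun l l' => MonoidHom.ext fun k => he.1 k l l'

lemma mul_left (he : IsAltBicharacter e) (k k' l : K) : e (k * k') l = e k l * e k' l :=
  he.2.1 k k' l

lemma mul_right (he : IsAltBicharacter e) (k l l' : K) : e k (l * l') = e k l * e k l' :=
  he.1 k l l'

lemma apply_self (he : IsAltBicharacter e) (k : K) : e k k = 1 := he.2.2 k

lemma inv_right (he : IsAltBicharacter e) (k l : K) : e k l⁻¹ = (e k l)⁻¹ :=
  DFunLike.congr_fun (map_inv he.flat l) k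

lemma zpow_right (he : IsAltBicharacter e) (k l : K) (n : ℤ) : e k (l ^ n) = e k l ^ n :=
  DFunLike.congr_fun (map_zpow he.flat l n) k

lemma swap (he : IsAltBicharacter e) (k l : K) : e l k = (e k l)⁻¹ := by
  have h := he.apply_self (k * l)
  rw [he.mul_left, he.mul_right, he.mul_right, he.apply_self, he.apply_self, one_mul, mul_one] at h
  exact eq_inv_of_mul_eq_one_right h

lemma restrict (he : IsAltBicharacter e) (H : Subgroup K) :
    IsAltBicharacter (fun a b : H => e a b) :=
  ⟨fun _ _ _ => he.1 _ _ _, fun _ _ _ => he.2.1 _ _ _, fun _ => he.2.2 _⟩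

lemma flat_injective_of_forall_eq_one (he : IsAltBicharacter e)
    (h : ∀ l, (∀ k, e k l = 1) → l = 1) : Function.Injective he.flat :=
  (injective_iff_map_eq_one _).2 fun l hl => h l fun k => DFunLike.congr_fun hl k

lemma isNondegenerate_of_forall_eq_one [Finite K] (he : IsAltBicharacter e)
    (h : ∀ l, (∀ k, e k l = 1) → l = 1) : IsNondegenerate e := by
  have hcard := card_monoidHom_circle K
  have : Finite (K →* Circle) := Nat.finite_of_card_ne_zero (hcard ▸ Nat.card_pos.ne')
  exact ⟨MulEquiv.ofBijective he.flat
    ((he.flat_injective_of_forall_eq_one h).bijective_of_nat_card_le hcard.le), fun _ _ => rfl⟩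

lemma orderOf_flat (he : IsAltBicharacter e) (hnd : IsNondegenerate e) (x : K) :
    orderOf (he.flat x) = orderOf x :=
  orderOf_injective he.flat (he.flat_injective_of_forall_eq_one fun _ => hnd.eq_one) x

lemma exists_isPrimitiveRoot_exponent [Finite K] (he : IsAltBicharacter e)
    (hnd : IsNondegenerate e) :
    ∃ x y : K, orderOf x = Monoid.exponent K ∧ orderOf y = Monoid.exponent K ∧
      IsPrimitiveRoot (e x y) (Monoid.exponent K) := by
  obtain ⟨x, hx⟩ := Monoid.exists_orderOf_eq_exponent (Monoid.ExponentExists.of_finite (G := K))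
  obtain ⟨y, hy⟩ := exists_orderOf_apply_eq_orderOf (he.flat x)
  have hyx : orderOf (e y x) = Monoid.exponent K := hy.trans ((he.orderOf_flat hnd x).trans hx)
  refine ⟨x, y, hx, Nat.dvd_antisymm (Monoid.order_dvd_exponent y) ?_, ?_⟩
  · rw [← hyx]
    exact orderOf_map_dvd (he.flat x) y
  · rw [he.swap y x, ← hyx]
    exact (IsPrimitiveRoot.orderOf (e y x)).inv

/-- The orthogonal complement `H⊥ = {k | ∀ h ∈ H, e h k = 1}`, as the kernel of the map sending `k`
to the restriction of `e♭ k` to `H`. -/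
noncomputable def orthogonal (he : IsAltBicharacter e) (H : Subgroup K) : Subgroup K :=
  ((MonoidHom.domRestrictHom H Circle).comp he.flat).ker

lemma mem_orthogonal (he : IsAltBicharacter e) {H : Subgroup K} {k : K} :
    k ∈ he.orthogonal H ↔ ∀ h ∈ H, e h k = 1 :=
  DFunLike.ext_iff.trans Subtype.forall

lemma mem_orthogonal_closure_pair (he : IsAltBicharacter e) {x y k : K} :
    k ∈ he.orthogonal (Subgroup.closure {x, y}) ↔ e x k = 1 ∧ e y k = 1 := by
  have h : k ∈ he.orthogonal (Subgroup.closure {x, y}) ↔ {x, y} ⊆ ((he.flat k).ker : Set K) :=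
    he.mem_orthogonal.trans (Subgroup.closure_le (he.flat k).ker)
  exact h.trans Set.pair_subset_iff

lemma coe_orthogonal_closure_pair (he : IsAltBicharacter e) (x y : K) :
    (he.orthogonal (Subgroup.closure {x, y}) : Set K) = {k | e k x = 1 ∧ e k y = 1} := by
  ext k
  rw [SetLike.mem_coe, he.mem_orthogonal_closure_pair, Set.mem_ofPred_eq, he.swap k x, he.swap k y,
    inv_eq_one, inv_eq_one]

lemma isNondegenerate_closure_pair [Finite K] (he : IsAltBicharacter e) {x y : K} {d : ℕ}
    (hx : orderOf x = d) (hy : orderOf y = d) (hxy : IsPrimitiveRoot (e x y) d) :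
    IsNondegenerate (fun a b : Subgroup.closure {x, y} => e a b) := by
  have hyx : IsPrimitiveRoot (e y x) d := he.swap x y ▸ hxy.inv
  refine (he.restrict _).isNondegenerate_of_forall_eq_one fun ⟨l, hl⟩ horth => ?_
  have hl_orth : l ∈ he.orthogonal (Subgroup.closure {x, y}) :=
    he.mem_orthogonal.2 fun k hk => horth ⟨k, hk⟩
  obtain ⟨hxl, hyl⟩ := he.mem_orthogonal_closure_pair.1 hl_orth
  obtain ⟨m, n, rfl⟩ := Subgroup.mem_closure_pair.1 hl
  rw [he.mul_right, he.zpow_right, he.zpow_right, he.apply_self, one_zpow] at hxl hyl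
  rw [one_mul, hxy.zpow_eq_one_iff_dvd] at hxl
  rw [mul_one, hyx.zpow_eq_one_iff_dvd] at hyl
  have hxm : x ^ m = 1 := orderOf_dvd_iff_zpow_eq_one.1 (hx ▸ hyl)
  have hyn : y ^ n = 1 := orderOf_dvd_iff_zpow_eq_one.1 (hy ▸ hxl)
  rw [Subgroup.mk_eq_one, hxm, hyn, mul_one]

lemma isCompl_orthogonal (he : IsAltBicharacter e) {H : Subgroup K}
    (hH : IsNondegenerate (fun a b : H => e a b)) : IsCompl H (he.orthogonal H) := by
  constructor
  · refine Subgroup.disjoint_def.2 fun {k} hk hk_orth => ?_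
    exact congrArg Subtype.val
      (hH.eq_one (l := ⟨k, hk⟩) fun h => he.mem_orthogonal.1 hk_orth h h.2)
  · refine codisjoint_iff.2 (eq_top_iff.2 fun k _ => ?_)
    obtain ⟨h, hh⟩ := hH.exists_eq_apply ((he.flat k).domRestrict H)
    have hk_orth : (h : K)⁻¹ * k ∈ he.orthogonal H := by
      refine he.mem_orthogonal.2 fun a ha => ?_
      have hak : e a h = e a k := hh ⟨a, ha⟩
      rw [he.mul_right, he.inv_right, hak, inv_mul_cancel]
    exact Subgroup.mem_sup.2 ⟨h, h.2, _, hk_orth, mul_inv_cancel_left _ _⟩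

lemma isNondegenerate_orthogonal [Finite K] (he : IsAltBicharacter e) (hnd : IsNondegenerate e)
    {H : Subgroup K} (hH : Codisjoint H (he.orthogonal H)) :
    IsNondegenerate (fun a b : he.orthogonal H => e a b) := by
  refine (he.restrict _).isNondegenerate_of_forall_eq_one fun p hp =>
    Subtype.ext (hnd.eq_one fun k => ?_)
  have hk : k ∈ H ⊔ he.orthogonal H := hH.eq_top ▸ Subgroup.mem_top k
  obtain ⟨h, hh, q, hq, rfl⟩ := Subgroup.mem_sup.1 hk
  rw [he.mul_left, he.mem_orthogonal.1 p.2 h hh, one_mul]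
  exact hp ⟨q, hq⟩

end IsAltBicharacter

end Bicharacter

/-- Splitting off a "hyperbolic plane": in a nontrivial finite abelian group `K` of exponent
`d` with nondegenerate alternating bicharacter `e`, there are elements `x, y` of order `d`
with `e x y` a primitive `d`-th root of unity, and `K` is the internal direct sum of the
subgroup `H` generated by `x` and `y` and its orthogonal complement `H⊥`, on which `e`
restricts to a nondegenerate alternating bicharacter. -/
theorem finite_heisenberg_split_hyperbolic_plane
    {K : Type*} [CommGroup K] [Finite K] [Nontrivial K]
    (e : K → K → Circle) (he : IsAltBicharacter e) (hnd : IsNondegenerate e)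
    (d : ℕ) (hd : Monoid.exponent K = d) :
    ∃ x y : K, orderOf x = d ∧ orderOf y = d ∧ IsPrimitiveRoot (e x y) d ∧
      ∃ Hperp : Subgroup K,
        (Hperp : Set K) = {k : K | e k x = 1 ∧ e k y = 1} ∧
        IsCompl (Subgroup.closure {x, y} : Subgroup K) Hperp ∧
        IsAltBicharacter (fun a b : Hperp => e (a : K) (b : K)) ∧
        IsNondegenerate (fun a b : Hperp => e (a : K) (b : K)) := by
  subst hd
  obtain ⟨x, y, hx, hy, hxy⟩ := he.exists_isPrimitiveRoot_exponent hnd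
  have hH := he.isNondegenerate_closure_pair hx hy hxy
  have hcompl := he.isCompl_orthogonal hH
  exact ⟨x, y, hx, hy, hxy, he.orthogonal _, he.coe_orthogonal_closure_pair x y, hcompl,
    he.restrict _, he.isNondegenerate_orthogonal hnd hcompl.codisjoint⟩
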